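/- Suppose E[V(y Z)] < ∞ for every y > 0, where V is the convex conjugate of the utility function U. Then the value function x ↦ u(x, U) is upper semicontinuous on (0, ∞). -/

import Mathlib

/-!
Write `G(f) = E[V(yZ) + yZf - U(f)]` for the expected duality gap of a nonnegative `f`; its integrand
is nonnegative by definition of `V`. The hypothesis on `V` makes `V(yZ)` integrable, so that
`E[U(f)] = E[V(yZ)] + y E[Zf] - G(f)` (`eexp_eq_sub_dualGap`). Since the value function is
nondecreasing, upper semicontinuity at `x` only concerns the budgets `x + 1/n`. Taking `y` small makes
the term `y E[Zf]` negligible, and the theorem becomes a closure property (`exists_budget_loss_le`):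
if `f n` have costs `E[Z f n]` bounded by a sequence tending to `x` and gaps `G(f n) ≤ M`, then for
every `δ > 0` some `g` has cost at most `x` and `G(g) ≤ M + δ`. As `U` is not concave, neither
convex combinations nor weak limits of the `f n` are available.

To prove the closure property, encode the whole sequence `(f n)` as a single real random variable `T`,
through a Borel embedding of `ℕ → ℝ≥0` into `ℝ`. On the countably many level sets of `T` of positive
probability every `f n` is constant, so by compactness a subsequence converges pointwise on their
union `A`, the costs on `A` and on its complement converging too. Fatou's lemma together with lower
semicontinuity of the gap shows that the limit is admissible on `A`
(`eventually_lintegral_le_add`). On the complement of `A`, where `T` has no atoms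
(`frequently_replace`), let `b` be the limiting cost. If `b = 0`, a further subsequence tends to `0`
almost everywhere and Fatou's lemma applies again. If `b > 0`, the cost exceeds `b` by arbitrarily
little, and replacing `f n` by `min (f n) (b / 4)` on a set `E` brings it down to `b`. Bisecting along
the level sets of `T` (`exists_small_set`) provides `E` carrying a fixed fraction of the total
possible saving and so small a part of the integrable gap of the constant `b / 4` that `G` increases
by at most `δ`.
-/

open MeasureTheory Filter Set Topology ENNReal

noncomputable section

/-- The utility function extended to all of `ℝ`, with value `−∞` on `(−∞,0)` and
`U(0) := lim_{x ↓ 0} U(x)` (here, by monotonicity, the infimum over `(0,∞)`). -/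
def Uext (U : ℝ → ℝ) : ℝ → EReal := fun x =>
  if 0 < x then (U x : EReal)
  else if x = 0 then ⨅ z : {z : ℝ // 0 < z}, ((U z.1 : ℝ) : EReal)
  else ⊥

/-- A (possibly non-concave) utility function. -/
structure IsUtility (U : ℝ → ℝ) : Prop where
  mono : ∀ ⦃x y : ℝ⦄, 0 < x → x ≤ y → U x ≤ U y
  nonconst : ∃ x y : ℝ, 0 < x ∧ 0 < y ∧ U x ≠ U y
  usc : UpperSemicontinuousOn U (Set.Ioi 0)
  growth : Filter.Tendsto (fun x => U x / x) Filter.atTop (nhds 0)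
  pos_limit : ∃ x : ℝ, 0 < x ∧ 0 < U x

/-- Concavity for `EReal`-valued functions on `ℝ`. -/
def ERealConcave (g : ℝ → EReal) : Prop :=
  ∀ x y : ℝ, ∀ t : ℝ, 0 ≤ t → t ≤ 1 →
    ((t : ℝ) : EReal) * g x + (((1 - t) : ℝ) : EReal) * g y ≤ g (t * x + (1 - t) * y)

/-- `Uc` is the concave envelope of the utility `U`: the smallest concave function
dominating (the extension of) `U`. -/
def IsConcaveEnvelope (U : ℝ → ℝ) (Uc : ℝ → EReal) : Prop :=
  ERealConcave Uc ∧ (∀ x : ℝ, Uext U x ≤ Uc x) ∧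
    ∀ g : ℝ → EReal, ERealConcave g → (∀ x : ℝ, Uext U x ≤ g x) → ∀ x : ℝ, Uc x ≤ g x

/-- The convex conjugate `V(y) = sup_{x > 0} (U(x) − x y)`. -/
def conj (U : ℝ → ℝ) (y : ℝ) : ℝ :=
  sSup ((fun x => U x - x * y) '' Set.Ioi (0 : ℝ))

/-- The subdifferential of a convex function `V` (viewed on `(0,∞)`). -/
def subdiff (V : ℝ → ℝ) (y : ℝ) : Set ℝ :=
  {q : ℝ | ∀ z : ℝ, 0 < z → V y + q * (z - y) ≤ V z}

/-- The extended asymptotic elasticity `EAE(V) = limsup_{y ↓ 0} sup_{q ∈ ∂V(y)} |q| y / V(y)`. -/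
def EAE (V : ℝ → ℝ) : EReal :=
  Filter.limsup (fun y : ℝ => ⨆ q ∈ subdiff V y, (((|q| * y / V y) : ℝ) : EReal))
    (nhdsWithin (0 : ℝ) (Set.Ioi 0))

/-- The positive part of an extended real number, as an element of `ℝ≥0∞`. -/
def erealPos (a : EReal) : ℝ≥0∞ := if a = ⊤ then ⊤ else ENNReal.ofReal a.toReal

/-- The expectation of an `EReal`-valued function: `E[g] = E[g⁺] − E[g⁻]`, with the
convention `E[g] = −∞` whenever the negative part `g⁻` is not integrable. -/
def eexp {Ω : Type*} [MeasurableSpace Ω] (μ : Measure Ω) (g : Ω → EReal) : EReal :=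
  if (∫⁻ ω, erealPos (-(g ω)) ∂μ) < ⊤ then
    ((∫⁻ ω, erealPos (g ω) ∂μ : ℝ≥0∞) : EReal) - (((∫⁻ ω, erealPos (-(g ω)) ∂μ).toReal : ℝ) : EReal)
  else ⊥

/-- The set `C(x)` of attainable terminal liquidation values: nonnegative measurable `f`
with `E[Z f] ≤ x`. -/
def Cset {Ω : Type*} [MeasurableSpace Ω] (μ : Measure Ω) (Z : Ω → ℝ) (x : ℝ) :
    Set (Ω → ℝ) :=
  {f | Measurable f ∧ (∀ ω, 0 ≤ f ω) ∧
    (∫⁻ ω, ENNReal.ofReal (Z ω * f ω) ∂μ) ≤ ENNReal.ofReal x}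

/-- The value function `u(x, W) = sup {E[W(f)] : f ∈ C(x)}`. -/
def valueFn {Ω : Type*} [MeasurableSpace Ω] (μ : Measure Ω) (Z : Ω → ℝ)
    (W : ℝ → EReal) (x : ℝ) : EReal :=
  ⨆ f ∈ Cset μ Z x, eexp μ (fun ω => W (f ω))

end

/-! ### The extended utility and its conjugate -/

open scoped NNReal

theorem Uext_of_pos {U : ℝ → ℝ} {x : ℝ} (hx : 0 < x) : Uext U x = U x := if_pos hx

theorem Uext_zero (U : ℝ → ℝ) :
    Uext U 0 = ⨅ z : {z : ℝ // 0 < z}, ((U z.1 : ℝ) : EReal) := by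
  simp [Uext]

theorem Uext_of_neg {U : ℝ → ℝ} {x : ℝ} (hx : x < 0) : Uext U x = ⊥ := by
  simp [Uext, hx.le, hx.ne]

theorem Uext_zero_le {U : ℝ → ℝ} {z : ℝ} (hz : 0 < z) : Uext U 0 ≤ U z := by
  rw [Uext_zero]
  exact iInf_le (fun z : {z : ℝ // 0 < z} => ((U z.1 : ℝ) : EReal)) ⟨z, hz⟩

theorem Uext_ne_top (U : ℝ → ℝ) (x : ℝ) : Uext U x ≠ ⊤ := by
  rcases lt_trichotomy x 0 with hx | rfl | hx
  · simp [Uext_of_neg hx]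
  · exact ne_top_of_le_ne_top (EReal.coe_ne_top _) (Uext_zero_le one_pos)
  · simp [Uext_of_pos hx]

theorem Uext_mono {U : ℝ → ℝ} (hU : IsUtility U) : Monotone (Uext U) := by
  intro x y hxy
  rcases lt_trichotomy x 0 with hx | rfl | hx
  · simp [Uext_of_neg hx]
  · rcases hxy.eq_or_lt with rfl | hy
    · exact le_rfl
    · rw [Uext_of_pos hy]; exact Uext_zero_le hy
  · rw [Uext_of_pos hx, Uext_of_pos (hx.trans_le hxy)]
    exact_mod_cast hU.mono hx hxy

/-- Upper semicontinuity holds on the whole line: at `0` because `U(0)` is the infimum of `U`. -/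
theorem Uext_upperSemicontinuous {U : ℝ → ℝ} (hU : IsUtility U) :
    UpperSemicontinuous (Uext U) := by
  intro x a ha
  change Uext U x < a at ha
  change ∀ᶠ x' in 𝓝 x, Uext U x' < a
  rcases lt_trichotomy x 0 with hx | rfl | hx
  · filter_upwards [gt_mem_nhds hx] with y hy
    rw [Uext_of_neg hy]; exact bot_le.trans_lt ha
  · rw [Uext_zero, iInf_lt_iff] at ha
    obtain ⟨⟨z, hz⟩, ha⟩ := ha
    filter_upwards [gt_mem_nhds hz] with y hy
    refine (Uext_mono hU hy.le).trans_lt ?_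
    rwa [Uext_of_pos hz]
  · rw [Uext_of_pos hx] at ha
    obtain ⟨q, hq, hqa⟩ := EReal.lt_iff_exists_real_btwn.1 ha
    have h := hU.usc x hx q (EReal.coe_lt_coe_iff.1 hq)
    rw [IsOpen.nhdsWithin_eq isOpen_Ioi hx] at h
    filter_upwards [h, lt_mem_nhds hx] with y hy hy0
    rw [Uext_of_pos hy0]
    exact (EReal.coe_lt_coe_iff.2 hy).trans hqa

/-- Sublinear growth of `U` makes the supremum defining `conj U y` a genuine one. -/
theorem conj_bddAbove {U : ℝ → ℝ} (hU : IsUtility U) {y : ℝ} (hy : 0 < y) :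
    BddAbove ((fun x => U x - x * y) '' Ioi (0 : ℝ)) := by
  obtain ⟨R, hR⟩ := ((hU.growth.eventually (gt_mem_nhds hy)).and
    (eventually_gt_atTop 0)).exists_forall_of_atTop
  have hR0 : 0 < R := (hR R le_rfl).2
  refine ⟨max (U R) 0, ?_⟩
  rintro _ ⟨x, hx, rfl⟩
  have hx0 : 0 < x := hx
  rcases le_total x R with h | h
  · refine le_max_of_le_left ?_
    have := hU.mono hx0 h
    have : 0 < x * y := by positivity
    simp only; linarith
  · refine le_max_of_le_right ?_
    have := (div_lt_iff₀ hx0).1 (hR x h).1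
    simp only; linarith

theorem le_conj {U : ℝ → ℝ} (hU : IsUtility U) {x y : ℝ} (hx : 0 < x) (hy : 0 < y) :
    U x ≤ conj U y + x * y := by
  have := le_csSup (conj_bddAbove hU hy) (mem_image_of_mem _ (mem_Ioi.2 hx))
  simp only [conj]
  linarith

/-- Fenchel's inequality, including the boundary point `x = 0`. -/
theorem Uext_le_conj {U : ℝ → ℝ} (hU : IsUtility U) {x y : ℝ} (hx : 0 ≤ x) (hy : 0 < y) :
    Uext U x ≤ ((conj U y + x * y : ℝ) : EReal) := by
  rcases hx.eq_or_lt with rfl | hx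
  · -- For `q > conj U y`, the point `z = (q - conj U y) / y` satisfies `U z ≤ q`.
    refine le_of_forall_gt fun a ha => ?_
    obtain ⟨q, hq, hqa⟩ := EReal.lt_iff_exists_real_btwn.1 ha
    have hq' : conj U y < q := by simpa using EReal.coe_lt_coe_iff.1 hq
    have hz : 0 < (q - conj U y) / y := div_pos (sub_pos.2 hq') hy
    refine ((Uext_zero_le hz).trans (EReal.coe_le_coe_iff.2 ?_)).trans_lt hqa
    have := le_conj hU hz hy
    rwa [div_mul_cancel₀ _ hy.ne', add_sub_cancel] at this
  · rw [Uext_of_pos hx]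
    exact EReal.coe_le_coe_iff.2 (le_conj hU hx hy)

theorem conj_antitone {U : ℝ → ℝ} (hU : IsUtility U) {y y' : ℝ} (hy : 0 < y) (h : y ≤ y') :
    conj U y' ≤ conj U y := by
  refine csSup_le (Set.Nonempty.image _ ⟨1, mem_Ioi.2 one_pos⟩) ?_
  rintro _ ⟨x, hx, rfl⟩
  have hx0 : 0 < x := hx
  have := le_conj hU hx0 hy
  have : x * y ≤ x * y' := by gcongr
  simp only; linarith

theorem measurable_conj_comp {Ω : Type*} [MeasurableSpace Ω] {U : ℝ → ℝ} (hU : IsUtility U)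
    {Y : Ω → ℝ} (hY : Measurable Y) (hpos : ∀ ω, 0 < Y ω) :
    Measurable fun ω => conj U (Y ω) := by
  have h1 : Antitone fun p : Ioi (0 : ℝ) => conj U p := fun p q hpq =>
    conj_antitone hU p.2 hpq
  exact h1.measurable.comp (hY.subtype_mk (h := hpos))

/-! ### Expectations and the duality gap -/

theorem erealPos_coe (a : ℝ) : erealPos a = ENNReal.ofReal a := by
  simp [erealPos]

theorem eexp_coe {Ω : Type*} [MeasurableSpace Ω] {μ : Measure Ω} {g : Ω → EReal} {w : Ω → ℝ}
    (hw : Integrable w μ) (hg : ∀ᵐ ω ∂μ, g ω = w ω) :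
    eexp μ g = ((∫ ω, w ω ∂μ : ℝ) : EReal) := by
  have hpos : ∫⁻ ω, erealPos (g ω) ∂μ = ∫⁻ ω, ENNReal.ofReal (w ω) ∂μ :=
    lintegral_congr_ae (hg.mono fun ω h => by simp only [h, erealPos_coe])
  have hneg : ∫⁻ ω, erealPos (-(g ω)) ∂μ = ∫⁻ ω, ENNReal.ofReal (-w ω) ∂μ :=
    lintegral_congr_ae (hg.mono fun ω h => by
      simp only [h, ← EReal.coe_neg, erealPos_coe])
  have hposfin : ∫⁻ ω, ENNReal.ofReal (w ω) ∂μ < ⊤ := hw.lintegral_lt_top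
  have hnegfin : ∫⁻ ω, ENNReal.ofReal (-w ω) ∂μ < ⊤ := hw.neg.lintegral_lt_top
  rw [eexp, hpos, hneg, if_pos hnegfin, integral_eq_lintegral_pos_part_sub_lintegral_neg_part hw,
    EReal.coe_sub]
  congr 1
  rw [← EReal.toReal_coe_ennreal]
  exact (EReal.coe_toReal (by simpa using hposfin.ne) (by simp)).symm

theorem lintegral_neg_lt_top_of_bot_lt_eexp {Ω : Type*} [MeasurableSpace Ω] {μ : Measure Ω}
    {g : Ω → EReal} (h : ⊥ < eexp μ g) : ∫⁻ ω, erealPos (-(g ω)) ∂μ < ⊤ := by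
  by_contra hc
  rw [eexp, if_neg hc] at h
  exact lt_irrefl _ h

theorem integrable_of_ofReal {Ω : Type*} [MeasurableSpace Ω] {μ : Measure Ω} {w : Ω → ℝ}
    (hw : Measurable w) (hpos : ∫⁻ ω, ENNReal.ofReal (w ω) ∂μ < ⊤)
    (hneg : ∫⁻ ω, ENNReal.ofReal (-w ω) ∂μ < ⊤) : Integrable w μ := by
  refine ⟨hw.aestronglyMeasurable, ?_⟩
  rw [hasFiniteIntegral_iff_norm]
  refine lt_of_le_of_lt (lintegral_mono (g := fun ω => ENNReal.ofReal (w ω) +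
    ENNReal.ofReal (-w ω)) fun ω => ?_) ?_
  · rcases le_total 0 (w ω) with h | h
    · simp [abs_of_nonneg h]
    · simp [abs_of_nonpos h]
  · rw [lintegral_add_left (by fun_prop)]
    exact ENNReal.add_lt_top.2 ⟨hpos, hneg⟩

/-- `eexp` being `< ⊤` does not by itself exclude a non-integrable negative part; here
`conj U (Y ω) ≥ U 1 - Y ω` does. -/
theorem integrable_conj {Ω : Type*} [MeasurableSpace Ω] {μ : Measure Ω} [IsFiniteMeasure μ]
    {U : ℝ → ℝ} (hU : IsUtility U) {Y : Ω → ℝ} (hY : Measurable Y) (hpos : ∀ ω, 0 < Y ω)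
    (hfint : Integrable Y μ) (hV : eexp μ (fun ω => ((conj U (Y ω) : ℝ) : EReal)) < ⊤) :
    Integrable (fun ω => conj U (Y ω)) μ := by
  have hneg : ∫⁻ ω, ENNReal.ofReal (-conj U (Y ω)) ∂μ < ⊤ := by
    refine lt_of_le_of_lt (lintegral_mono (g := fun ω => ENNReal.ofReal (Y ω - U 1)) fun ω => ?_)
      (hfint.sub (integrable_const (U 1))).lintegral_lt_top
    have := le_conj hU one_pos (hpos ω)
    exact ENNReal.ofReal_le_ofReal (by linarith)
  refine integrable_of_ofReal (measurable_conj_comp hU hY hpos) ?_ hneg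
  simp only [eexp, ← EReal.coe_neg, erealPos_coe] at hV
  rw [if_pos hneg] at hV
  by_contra hc
  rw [not_lt_top_iff.1 hc, EReal.coe_ennreal_top, EReal.top_sub_coe] at hV
  exact lt_irrefl _ hV

/-- The duality gap `V(y) + s y - U(s) ∈ [0, ∞]` in Fenchel's inequality for `s ≥ 0`; it is `⊤` when
`Uext U s = ⊥`. Since the gap is nonnegative for `s ≥ 0` and `y > 0`, nothing is lost by the truncation
`EReal.toENNReal` there. -/
noncomputable def dualGap (U : ℝ → ℝ) (y s : ℝ) : ℝ≥0∞ :=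
  (((conj U y + s * y : ℝ) : EReal) - Uext U s).toENNReal

theorem dualGap_of_coe {U : ℝ → ℝ} {y s w : ℝ} (h : Uext U s = w) :
    dualGap U y s = ENNReal.ofReal (conj U y + s * y - w) := by
  rw [dualGap, h, ← EReal.coe_sub, EReal.real_coe_toENNReal]

theorem Uext_eq_coe_of_dualGap_ne_top {U : ℝ → ℝ} {y s : ℝ} (h : dualGap U y s ≠ ⊤) :
    Uext U s = ((Uext U s).toReal : EReal) := by
  refine (EReal.coe_toReal (Uext_ne_top U s) fun hb => h ?_).symm
  rw [dualGap, hb, EReal.coe_sub_bot, EReal.toENNReal_top]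

theorem dualGap_lowerSemicontinuous {U : ℝ → ℝ} (hU : IsUtility U) (y : ℝ) :
    LowerSemicontinuous (dualGap U y) := by
  have h1 : LowerSemicontinuous fun s : ℝ => ((conj U y + s * y : ℝ) : EReal) :=
    (continuous_coe_real_ereal.comp (by fun_prop)).lowerSemicontinuous
  have h2 : LowerSemicontinuous fun s : ℝ => -Uext U s :=
    continuous_neg.comp_upperSemicontinuous_antitone (Uext_upperSemicontinuous hU)
      fun a b hab => EReal.neg_le_neg_iff.2 hab
  have h3 := h1.add' h2 fun s => EReal.continuousAt_add (Or.inl (EReal.coe_ne_top _))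
    (Or.inl (EReal.coe_ne_bot _))
  exact EReal.continuous_toENNReal.comp_lowerSemicontinuous h3
    fun a b hab => EReal.toENNReal_le_toENNReal hab

theorem measurable_dualGap {Ω : Type*} [MeasurableSpace Ω] {U : ℝ → ℝ} (hU : IsUtility U)
    {Y f : Ω → ℝ} (hY : Measurable Y) (hpos : ∀ ω, 0 < Y ω) (hf : Measurable f) :
    Measurable fun ω => dualGap U (Y ω) (f ω) := by
  have h1 := measurable_conj_comp hU hY hpos
  have h2 : Measurable fun ω => ((conj U (Y ω) + f ω * Y ω : ℝ) : EReal) :=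
    (h1.add (hf.mul hY)).coe_real_ereal
  have h3 : Measurable fun ω => -Uext U (f ω) :=
    continuous_neg.measurable.comp ((Uext_mono hU).measurable.comp hf)
  exact (h2.add h3).ereal_toENNReal

/-- `E[U(f)] = E[V(Y)] + E[fY] - E[gap]` as soon as the expected gap is finite or `E[U(f)] ≠ ⊥`; in
either case `U(f)` is integrable. -/
theorem eexp_eq_sub_dualGap {Ω : Type*} [MeasurableSpace Ω] {μ : Measure Ω}
    {U : ℝ → ℝ} (hU : IsUtility U) {Y f : Ω → ℝ} (hY : Measurable Y) (hpos : ∀ ω, 0 < Y ω)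
    (hV : Integrable (fun ω => conj U (Y ω)) μ) (hf : Measurable f) (hf0 : ∀ ω, 0 ≤ f ω)
    (hfY : Integrable (fun ω => f ω * Y ω) μ)
    (h : ∫⁻ ω, dualGap U (Y ω) (f ω) ∂μ < ⊤ ∨ ⊥ < eexp μ (fun ω => Uext U (f ω))) :
    ∫⁻ ω, dualGap U (Y ω) (f ω) ∂μ < ⊤ ∧ eexp μ (fun ω => Uext U (f ω)) =
      ((∫ ω, conj U (Y ω) ∂μ + ∫ ω, f ω * Y ω ∂μ -
        (∫⁻ ω, dualGap U (Y ω) (f ω) ∂μ).toReal : ℝ) : EReal) := by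
  have hUmeas : Measurable fun ω => Uext U (f ω) := (Uext_mono hU).measurable.comp hf
  have hVf : Integrable (fun ω => conj U (Y ω) + f ω * Y ω) μ := hV.add hfY
  let w : Ω → ℝ := fun ω => (Uext U (f ω)).toReal
  have hwmeas : Measurable w := hUmeas.ereal_toReal
  have hle : ∀ ω, Uext U (f ω) = w ω → w ω ≤ conj U (Y ω) + f ω * Y ω := fun ω hω => by
    have := Uext_le_conj hU (hf0 ω) (hpos ω)
    rw [hω] at this
    exact EReal.coe_le_coe_iff.1 this
  obtain ⟨hwcoe, hwint⟩ : (∀ᵐ ω ∂μ, Uext U (f ω) = w ω) ∧ Integrable w μ := by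
    rcases h with h | h
    · have hae : ∀ᵐ ω ∂μ, Uext U (f ω) = w ω :=
        (ae_lt_top (measurable_dualGap hU hY hpos hf) h.ne).mono fun ω hω =>
          Uext_eq_coe_of_dualGap_ne_top hω.ne
      refine ⟨hae, ?_⟩
      have hgap : Integrable (fun ω => (dualGap U (Y ω) (f ω)).toReal) μ :=
        integrable_toReal_of_lintegral_ne_top (measurable_dualGap hU hY hpos hf).aemeasurable h.ne
      refine (hVf.sub hgap).congr (hae.mono fun ω hω => ?_)
      simp only [Pi.sub_apply, dualGap_of_coe hω]
      rw [ENNReal.toReal_ofReal (sub_nonneg.2 (hle ω hω))]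
      ring
    · have hneg := lintegral_neg_lt_top_of_bot_lt_eexp h
      have hmeas : Measurable fun ω => erealPos (-(Uext U (f ω))) := by
        have : erealPos = EReal.toENNReal := by ext a; rfl
        rw [this]
        exact (continuous_neg.measurable.comp hUmeas).ereal_toENNReal
      have hae : ∀ᵐ ω ∂μ, Uext U (f ω) = w ω :=
        (ae_lt_top hmeas hneg.ne).mono fun ω hω => by
          refine (EReal.coe_toReal (Uext_ne_top U _) fun hb => ?_).symm
          simp [hb, erealPos] at hω
      refine ⟨hae, integrable_of_ofReal hwmeas ?_ ?_⟩
      · refine lt_of_le_of_lt (lintegral_mono_ae (hae.mono fun ω hω => ?_)) hVf.lintegral_lt_top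
        exact ENNReal.ofReal_le_ofReal (hle ω hω)
      · refine lt_of_le_of_lt (lintegral_mono_ae (hae.mono fun ω hω => ?_)) hneg
        rw [hω, ← EReal.coe_neg, erealPos_coe]
  have hgap : ∫⁻ ω, dualGap U (Y ω) (f ω) ∂μ =
      ENNReal.ofReal (∫ ω, (conj U (Y ω) + f ω * Y ω - w ω) ∂μ) := by
    rw [ofReal_integral_eq_lintegral_ofReal
      (f := fun ω => conj U (Y ω) + f ω * Y ω - w ω) (hVf.sub hwint)
      (hwcoe.mono fun ω hω => sub_nonneg.2 (hle ω hω))]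
    exact lintegral_congr_ae (hwcoe.mono fun ω hω => dualGap_of_coe hω)
  refine ⟨hgap ▸ ENNReal.ofReal_lt_top, ?_⟩
  rw [eexp_coe hwint hwcoe, hgap, ENNReal.toReal_ofReal (integral_nonneg_of_ae
      (hwcoe.mono fun ω hω => sub_nonneg.2 (hle ω hω))), integral_sub hVf hwint,
    integral_add hV hfY]
  congr 1
  ring

/-! ### Selecting small sets for a measure without atoms -/

/-- The distribution function of a finite atomless measure is continuous, hence takes the value half of
the total mass. -/
theorem exists_measure_Iic_eq_half (ρ : Measure ℝ) [IsFiniteMeasure ρ] [NullSingletonClass ρ] :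
    ∃ t : ℝ, ρ (Iic t) = ρ univ / 2 := by
  rcases eq_or_ne (ρ univ) 0 with h0 | h0
  · exact ⟨0, by rw [h0, ENNReal.zero_div]; exact measure_mono_null (subset_univ _) h0⟩
  have hfin : ρ univ ≠ ⊤ := measure_ne_top ρ _
  have hcont : Continuous (fun t : ℝ => ρ.real (Iic t)) := by
    have h1 : Continuous (fun t : ℝ => ρ.real (Iic 0) + ∫ _ in (0 : ℝ)..t, (1 : ℝ) ∂ρ) :=
      continuous_const.add
        (intervalIntegral.continuous_primitive
          (fun a b => (integrable_const (1 : ℝ)).intervalIntegrable) 0)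
    convert h1 using 2 with t
    have := intervalIntegral.integral_Iic_sub_Iic (μ := ρ) (f := fun _ => (1 : ℝ)) (a := 0) (b := t)
      (integrable_const _).integrableOn (integrable_const _).integrableOn
    simp only [setIntegral_const, smul_eq_mul, mul_one] at this
    linarith
  have hhalf_pos : 0 < ρ univ / 2 := ENNReal.half_pos h0
  have hhalf_lt : ρ univ / 2 < ρ univ := ENNReal.half_lt_self h0 hfin
  have hbot : Tendsto (fun t : ℝ => ρ (Iic t)) atBot (𝓝 0) := by
    have h := tendsto_measure_iInter_atBot (μ := ρ) (s := fun t : ℝ => Iic t)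
      (fun t => measurableSet_Iic.nullMeasurableSet) (fun a b hab => Iic_subset_Iic.2 hab)
      ⟨0, measure_ne_top _ _⟩
    rwa [iInter_Iic_eq_empty_iff.2 (by simp [not_bddBelow_univ]), measure_empty] at h
  obtain ⟨a, ha⟩ := (hbot.eventually (gt_mem_nhds hhalf_pos)).exists
  obtain ⟨b, hb⟩ := ((tendsto_measure_Iic_atTop ρ).eventually (lt_mem_nhds hhalf_lt)).exists
  have hhalf_fin : ρ univ / 2 ≠ ⊤ := (hhalf_lt.trans hfin.lt_top).ne
  obtain ⟨t, ht⟩ := mem_range_of_exists_le_of_exists_ge hcont (c := (ρ univ / 2).toReal)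
    ⟨a, ENNReal.toReal_mono hhalf_fin ha.le⟩
    ⟨b, ENNReal.toReal_mono (measure_ne_top ρ _) hb.le⟩
  exact ⟨t, (ENNReal.toReal_eq_toReal_iff' (measure_ne_top ρ _) hhalf_fin).1 ht⟩

section
variable {Ω : Type*} [MeasurableSpace Ω]

/-- Bisection: split the current set by a level `t` of `T` into two pieces of equal `r`-mass, and keep
the one with the smaller `H`-mass. -/
theorem exists_small_set {ν : Measure Ω} {T : Ω → ℝ} (hT : Measurable T)
    (hnull : ∀ t, ν (T ⁻¹' {t}) = 0) {r H : Ω → ℝ≥0∞} (hr : ∫⁻ ω, r ω ∂ν ≠ ⊤) (k : ℕ) :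
    ∃ E, MeasurableSet E ∧ ∫⁻ ω in E, r ω ∂ν = (∫⁻ ω, r ω ∂ν) / 2 ^ k ∧
      ∫⁻ ω in E, H ω ∂ν ≤ (∫⁻ ω, H ω ∂ν) / 2 ^ k := by
  induction k with
  | zero => exact ⟨univ, MeasurableSet.univ, by simp, by simp⟩
  | succ k ih =>
    obtain ⟨E, hE, hEr, hEH⟩ := ih
    have hpow : ∀ a : ℝ≥0∞, a / 2 ^ (k + 1) = a / 2 ^ k / 2 := fun a => by
      rw [pow_succ, div_eq_mul_inv, div_eq_mul_inv, div_eq_mul_inv, mul_assoc,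
        ENNReal.mul_inv (Or.inl (by simp)) (Or.inl (by simp))]
    have hErfin : ∫⁻ ω in E, r ω ∂ν ≠ ⊤ :=
      ne_top_of_le_ne_top hr (setLIntegral_le_lintegral E r)
    let η : Measure Ω := (ν.restrict E).withDensity r
    have hη : ∀ s, MeasurableSet s → η s = ∫⁻ ω in E ∩ s, r ω ∂ν := fun s hs => by
      rw [withDensity_apply _ hs, Measure.restrict_restrict hs, inter_comm]
    have : IsFiniteMeasure η := isFiniteMeasure_withDensity hErfin
    have : NullSingletonClass (η.map T) := ⟨fun t => by
      rw [Measure.map_apply hT (measurableSet_singleton t),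
        hη _ (hT (measurableSet_singleton t))]
      exact setLIntegral_measure_zero _ _ (measure_mono_null inter_subset_right (hnull t))⟩
    obtain ⟨t, ht⟩ := exists_measure_Iic_eq_half (η.map T)
    have hA : MeasurableSet (T ⁻¹' Iic t) := hT measurableSet_Iic
    rw [Measure.map_apply hT measurableSet_Iic, Measure.map_apply hT MeasurableSet.univ,
      preimage_univ, hη _ hA, hη _ MeasurableSet.univ, inter_univ] at ht
    have hsplit : ∀ q : Ω → ℝ≥0∞, ∫⁻ ω in E ∩ T ⁻¹' Iic t, q ω ∂ν +
        ∫⁻ ω in E \ T ⁻¹' Iic t, q ω ∂ν = ∫⁻ ω in E, q ω ∂ν :=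
      fun q => lintegral_inter_add_sdiff q E hA
    have ht' : ∫⁻ ω in E \ T ⁻¹' Iic t, r ω ∂ν = (∫⁻ ω in E, r ω ∂ν) / 2 := by
      have h := hsplit r
      rw [ht] at h
      have hfin : (∫⁻ ω in E, r ω ∂ν) / 2 ≠ ⊤ := ENNReal.div_ne_top hErfin (by simp)
      rw [← ENNReal.add_right_inj hfin, h, ENNReal.add_halves]
    simp only [hpow]
    rw [← hEr]
    by_cases hc : ∫⁻ ω in E ∩ T ⁻¹' Iic t, H ω ∂ν ≤ (∫⁻ ω, H ω ∂ν) / 2 ^ k / 2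
    · exact ⟨_, hE.inter hA, ht, hc⟩
    · refine ⟨_, hE.diff hA, ht', ?_⟩
      by_contra hc'
      push Not at hc hc'
      have := ENNReal.add_lt_add hc hc'
      rw [ENNReal.add_halves, hsplit] at this
      exact absurd hEH (not_le.2 this)

/-! ### The closure property -/

/-- Fatou's lemma for a lower semicontinuous integrand `l`, in an `ε`-`n` form. -/
theorem eventually_lintegral_le_add {ν : Measure Ω} {l : Ω → ℝ≥0 → ℝ≥0∞}
    (hlmeas : ∀ f : Ω → ℝ≥0, Measurable f → Measurable fun ω => l ω (f ω))
    (hlsc : ∀ ω, LowerSemicontinuous (l ω)) {f : ℕ → Ω → ℝ≥0} {g : Ω → ℝ≥0}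
    (hf : ∀ n, Measurable (f n)) (hlim : ∀ᵐ ω ∂ν, Tendsto (fun n => f n ω) atTop (𝓝 (g ω)))
    {M : ℝ≥0∞} (hM : M ≠ ⊤) (hle : ∀ n, ∫⁻ ω, l ω (f n ω) ∂ν ≤ M) {δ : ℝ≥0∞} (hδ : δ ≠ 0) :
    ∀ᶠ n in atTop, ∫⁻ ω, l ω (g ω) ∂ν ≤ ∫⁻ ω, l ω (f n ω) ∂ν + δ := by
  have hF : ∫⁻ ω, l ω (g ω) ∂ν ≤ liminf (fun n => ∫⁻ ω, l ω (f n ω) ∂ν) atTop := by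
    refine le_trans (lintegral_mono_ae ?_) (lintegral_liminf_le fun n => hlmeas _ (hf n))
    filter_upwards [hlim] with ω hω
    exact (LowerSemicontinuousAt.le_liminf (hlsc ω (g ω))).trans (liminf_le_liminf_of_le (u := l ω) hω)
  have hfin : ∫⁻ ω, l ω (g ω) ∂ν ≠ ⊤ :=
    ne_top_of_le_ne_top hM (hF.trans (liminf_le_of_le (by isBoundedDefault) fun b hb => by
      obtain ⟨n, hn⟩ := hb.exists
      exact hn.trans (hle n)))
  rcases eq_or_ne (∫⁻ ω, l ω (g ω) ∂ν) 0 with h0 | h0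
  · exact Eventually.of_forall fun n => by rw [h0]; exact zero_le
  · filter_upwards [eventually_lt_of_lt_liminf
      ((ENNReal.sub_lt_self hfin h0 hδ).trans_le hF)] with n hn
    exact tsub_le_iff_right.1 hn.le

/-- The atomless part of the closure property: a sequence whose costs tend to `b` can, infinitely often,
be replaced by a function of cost at most `b` with a loss increased by at most `δ`. -/
theorem frequently_replace {ν : Measure Ω} {T : Ω → ℝ} (hT : Measurable T)
    (hnull : ∀ t, ν (T ⁻¹' {t}) = 0) {z : Ω → ℝ≥0} (hz : Measurable z) (hz0 : ∀ ω, z ω ≠ 0)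
    (hz1 : ∫⁻ ω, z ω ∂ν ≤ 1) {l : Ω → ℝ≥0 → ℝ≥0∞}
    (hlmeas : ∀ f : Ω → ℝ≥0, Measurable f → Measurable fun ω => l ω (f ω))
    (hlsc : ∀ ω, LowerSemicontinuous (l ω))
    (hlfin : ∀ c : ℝ≥0, c ≠ 0 → ∫⁻ ω, l ω c ∂ν ≠ ⊤)
    {f : ℕ → Ω → ℝ≥0} (hf : ∀ n, Measurable (f n))
    {M : ℝ≥0∞} (hM : M ≠ ⊤) (hle : ∀ n, ∫⁻ ω, l ω (f n ω) ∂ν ≤ M)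
    {b : ℝ≥0∞} (hb : b ≠ ⊤) (hcost : ∀ n, ∫⁻ ω, z ω * f n ω ∂ν ≠ ⊤)
    (hlim : Tendsto (fun n => ∫⁻ ω, z ω * f n ω ∂ν) atTop (𝓝 b))
    {δ : ℝ≥0∞} (hδ : δ ≠ 0) :
    ∃ᶠ n in atTop, ∃ g : Ω → ℝ≥0, Measurable g ∧ ∫⁻ ω, z ω * g ω ∂ν ≤ b ∧
      ∫⁻ ω, l ω (g ω) ∂ν ≤ ∫⁻ ω, l ω (f n ω) ∂ν + δ := by
  rcases eq_or_ne b 0 with rfl | hb0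
  · -- Summable costs along a subsequence force almost everywhere convergence to `0`.
    have hev : ∀ k : ℕ, ∀ᶠ n in atTop, ∫⁻ ω, z ω * f n ω ∂ν ≤ (2 : ℝ≥0∞)⁻¹ ^ k := fun k =>
      (hlim.eventually (gt_mem_nhds (ENNReal.pow_pos (by simp) k))).mono fun n hn => hn.le
    obtain ⟨ψ, hψ, hψle⟩ := extraction_forall_of_eventually hev
    have hsum : ∫⁻ ω, ∑' k, (z ω * f (ψ k) ω : ℝ≥0∞) ∂ν ≠ ⊤ := by
      rw [lintegral_tsum fun k => (by have := hf (ψ k); fun_prop)]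
      refine ne_top_of_le_ne_top ?_ (ENNReal.tsum_le_tsum hψle)
      rw [ENNReal.tsum_geometric]
      simp
    have hae : ∀ᵐ ω ∂ν, Tendsto (fun k => f (ψ k) ω) atTop (𝓝 0) := by
      filter_upwards [ae_lt_top (by have := fun k => hf (ψ k); fun_prop) hsum] with ω hω
      have h := ENNReal.tendsto_atTop_zero_of_tsum_ne_top hω.ne
      have h' : Tendsto (fun k => z ω * f (ψ k) ω) atTop (𝓝 0) := by
        rw [← ENNReal.tendsto_coe]
        simpa using h
      have h'' := h'.const_mul (z ω)⁻¹
      simpa [inv_mul_cancel_left₀ (hz0 ω)] using h''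
    have := eventually_lintegral_le_add (g := fun _ => 0) hlmeas hlsc (fun k => hf (ψ k)) hae hM
      (fun k => hle (ψ k)) hδ
    refine hψ.tendsto_atTop.frequently (this.mono fun k hk => ?_).frequently
    exact ⟨fun _ => 0, measurable_const, by simp, hk⟩
  · -- Truncating `f n` at level `b / 4` everywhere would save at least `b / 2 - b / 4 = b / 4`; it is
    -- done only on `E`, which carries the fraction `2⁻ᵏ` of the saving.
    have hb4 : b / 4 ≠ 0 := by simp [hb0]
    have hb4' : b / 4 ≠ ⊤ := ENNReal.div_ne_top hb (by simp)
    obtain ⟨c, hc⟩ : ∃ c : ℝ≥0, (c : ℝ≥0∞) = b / 4 := WithTop.ne_top_iff_exists.1 hb4'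
    have hc0 : c ≠ 0 := by rintro rfl; exact hb4 (by simpa using hc.symm)
    obtain ⟨k, hk⟩ : ∃ k : ℕ, (∫⁻ ω, l ω c ∂ν) / 2 ^ k ≤ δ := by
      have h : Tendsto (fun k : ℕ => (∫⁻ ω, l ω c ∂ν) * (2⁻¹ : ℝ≥0∞) ^ k) atTop (𝓝 0) := by
        simpa using ENNReal.Tendsto.const_mul
          (ENNReal.tendsto_pow_atTop_nhds_zero_of_lt_one (r := 2⁻¹) (by simp))
          (Or.inr (hlfin c hc0))
      obtain ⟨k, hk⟩ := (h.eventually (gt_mem_nhds (pos_iff_ne_zero.2 hδ))).exists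
      exact ⟨k, by rw [div_eq_mul_inv, ENNReal.inv_pow]; exact hk.le⟩
    have hgain : b / 4 / 2 ^ k ≠ 0 := (ENNReal.div_pos hb4 (by simp)).ne'
    have h1 := hlim.eventually (lt_mem_nhds (ENNReal.half_lt_self hb0 hb))
    have h2 := hlim.eventually (gt_mem_nhds (ENNReal.lt_add_right hb hgain))
    refine (h1.and h2).frequently.mono fun n ⟨hn1, hn2⟩ => ?_
    have hfn := hf n
    have hsplit : ∀ ω, (z ω * f n ω : ℝ≥0∞) = z ω * min (f n ω) c + z ω * (f n ω - c : ℝ≥0) := by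
      intro ω
      rw [← mul_add]
      norm_cast
      congr 1
      rcases le_total (f n ω) c with h | h
      · simp [h, tsub_eq_zero_of_le h]
      · simp [h]
    have hr4 : b / 4 ≤ ∫⁻ ω, z ω * (f n ω - c : ℝ≥0) ∂ν := by
      have hA : ∫⁻ ω, z ω * f n ω ∂ν ≤ b / 4 + ∫⁻ ω, z ω * (f n ω - c : ℝ≥0) ∂ν := by
        simp_rw [hsplit]
        rw [lintegral_add_left (by fun_prop)]
        gcongr
        calc ∫⁻ ω, (z ω * min (f n ω) c : ℝ≥0∞) ∂ν ≤ ∫⁻ ω, z ω * c ∂ν := by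
              gcongr; exact min_le_right _ _
          _ = (∫⁻ ω, z ω ∂ν) * c := by rw [lintegral_mul_const _ (by fun_prop)]
          _ ≤ 1 * c := by gcongr
          _ = b / 4 := by rw [one_mul, hc]
      have h := hn1.le.trans hA
      have hbb : b / 2 = b / 4 + b / 4 := by
        have : (4 : ℝ≥0∞) = 2 * 2 := by norm_num
        rw [this, div_eq_mul_inv b (2 * 2), ENNReal.mul_inv (by simp) (by simp), ← mul_assoc,
          ← div_eq_mul_inv, ← div_eq_mul_inv, ENNReal.add_halves]
      rw [hbb] at h
      exact (ENNReal.add_le_add_iff_left hb4').1 h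
    have hrfin : ∫⁻ ω, z ω * (f n ω - c : ℝ≥0) ∂ν ≠ ⊤ :=
      ne_top_of_le_ne_top (hcost n) (by gcongr; exact tsub_le_self)
    obtain ⟨E, hE, hEr, hEH⟩ :=
      exists_small_set (H := fun ω => l ω c) hT hnull hrfin k
    classical
    refine ⟨E.piecewise (fun ω => min (f n ω) c) (f n),
      (hfn.min measurable_const).piecewise hE hfn, ?_, ?_⟩
    · have hsum : ∫⁻ ω, z ω * (E.piecewise (fun ω => min (f n ω) c) (f n) ω : ℝ≥0) ∂ν +
          ∫⁻ ω in E, z ω * (f n ω - c : ℝ≥0) ∂ν = ∫⁻ ω, z ω * f n ω ∂ν := by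
        rw [← lintegral_indicator hE, ← lintegral_add_right _
          (Measurable.indicator (by fun_prop) hE)]
        refine lintegral_congr fun ω => ?_
        by_cases hω : ω ∈ E
        · simp only [hω, piecewise_eq_of_mem, indicator_of_mem]
          rw [hsplit ω, ENNReal.coe_min]
        · simp [hω]
      have hfinE : ∫⁻ ω in E, z ω * (f n ω - c : ℝ≥0) ∂ν ≠ ⊤ :=
        ne_top_of_le_ne_top hrfin (setLIntegral_le_lintegral _ _)
      refine (ENNReal.add_le_add_iff_right hfinE).1 ?_
      rw [hsum, hEr]
      refine hn2.le.trans ?_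
      gcongr
    · refine le_trans ?_ (add_le_add_right (hEH.trans hk) _)
      rw [← lintegral_indicator hE, ← lintegral_add_left (hlmeas _ hfn)]
      refine lintegral_mono fun ω => ?_
      by_cases hω : ω ∈ E
      · simp only [hω, piecewise_eq_of_mem, indicator_of_mem]
        rcases min_choice (f n ω) c with h | h <;> rw [h]
        · exact le_self_add
        · exact le_add_self
      · simp [hω]

/-- The closure property: a sequence `f n` with costs `∫ z f n` bounded by `xs n → x` and losses at most
`M` yields a function of cost at most `x` and loss at most `M + δ`. The measure may have atoms, and
`l ω` need not be convex. -/
theorem exists_budget_loss_le {μ : Measure Ω} [IsFiniteMeasure μ]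
    {z : Ω → ℝ≥0} (hz : Measurable z) (hz0 : ∀ ω, z ω ≠ 0)
    (hz1 : ∫⁻ ω, z ω ∂μ ≤ 1) {l : Ω → ℝ≥0 → ℝ≥0∞}
    (hlmeas : ∀ f : Ω → ℝ≥0, Measurable f → Measurable fun ω => l ω (f ω))
    (hlsc : ∀ ω, LowerSemicontinuous (l ω))
    (hlfin : ∀ c : ℝ≥0, c ≠ 0 → ∫⁻ ω, l ω c ∂μ ≠ ⊤)
    {f : ℕ → Ω → ℝ≥0} (hf : ∀ n, Measurable (f n))
    {M : ℝ≥0∞} (hM : M ≠ ⊤) (hle : ∀ n, ∫⁻ ω, l ω (f n ω) ∂μ ≤ M)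
    {x : ℝ≥0∞} {xs : ℕ → ℝ≥0∞} (hx : x ≠ ⊤) (hxs : ∀ n, xs n ≠ ⊤) (hxlim : Tendsto xs atTop (𝓝 x))
    (hcost : ∀ n, ∫⁻ ω, z ω * f n ω ∂μ ≤ xs n)
    {δ : ℝ≥0∞} (hδ : δ ≠ 0) :
    ∃ g : Ω → ℝ≥0, Measurable g ∧ ∫⁻ ω, z ω * g ω ∂μ ≤ x ∧
      ∫⁻ ω, l ω (g ω) ∂μ ≤ M + δ := by
  let e := embeddingReal (ℕ → ℝ≥0)
  have he : MeasurableEmbedding e := measurableEmbedding_embeddingReal _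
  let T : Ω → ℝ := fun ω => e fun n => f n ω
  have hT : Measurable T := he.measurable.comp (measurable_pi_lambda _ hf)
  let F : ℕ → ℝ → ℝ≥0 := fun n t => Function.invFun e t n
  have hF : ∀ n ω, F n (T ω) = f n ω := fun n ω => by
    simp only [F, T, Function.leftInverse_invFun he.injective _]
  -- The atoms of the law of `T`.
  let S : Set ℝ := {t | 0 < μ (T ⁻¹' {t})}
  have hS : S.Countable := Measure.countable_meas_level_set_pos hT
  have : Countable S := hS
  let A : Set Ω := T ⁻¹' S
  have hA : MeasurableSet A := hT hS.measurableSet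
  obtain ⟨⟨cl, a, b⟩, φ, hφ, hconv⟩ := CompactSpace.tendsto_subseq
    (fun n => ((fun t : S => (F n t : ℝ≥0∞)), ∫⁻ ω in A, z ω * f n ω ∂μ,
      ∫⁻ ω in Aᶜ, z ω * f n ω ∂μ) : ℕ → (S → ℝ≥0∞) × ℝ≥0∞ × ℝ≥0∞)
  rw [Prod.tendsto_iff, Prod.tendsto_iff, tendsto_pi_nhds] at hconv
  obtain ⟨hcl, ha, hb⟩ := hconv
  simp only [Function.comp_def] at hcl ha hb
  -- Along `φ`, the values on the atoms converge to `cl`, the costs on `A` to `a` and on `Aᶜ` to `b`.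
  have hab : a + b ≤ x := by
    refine le_of_tendsto_of_tendsto' (ha.add hb) (hxlim.comp hφ.tendsto_atTop) fun n => ?_
    rw [lintegral_add_compl _ hA]
    exact hcost _
  have haf : a ≠ ⊤ := ne_top_of_le_ne_top hx (le_self_add.trans hab)
  have hbf : b ≠ ⊤ := ne_top_of_le_ne_top hx (le_add_self.trans hab)
  have hr : ∀ (s : Set Ω) (q : Ω → ℝ≥0∞), ∫⁻ ω in s, q ω ∂μ ≤ ∫⁻ ω, q ω ∂μ :=
    fun s q => setLIntegral_le_lintegral s q
  -- On `A` this is a limit; written as a `liminf`, it is measurable on all of `Ω`.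
  let L : Ω → ℝ≥0∞ := fun ω => liminf (fun n => (f (φ n) ω : ℝ≥0∞)) atTop
  have hLmeas : Measurable L := Measurable.liminf fun n => (hf (φ n)).coe_nnreal_ennreal
  have hLlim : ∀ ω ∈ A, Tendsto (fun n => (f (φ n) ω : ℝ≥0∞)) atTop (𝓝 (L ω)) := fun ω hω => by
    have h := hcl ⟨T ω, hω⟩
    simp only [hF] at h
    rwa [show L ω = _ from h.liminf_eq]
  have hLcost : ∫⁻ ω in A, z ω * L ω ∂μ ≤ a := by
    rw [← ha.liminf_eq]
    refine le_trans (lintegral_mono_ae ?_) (lintegral_liminf_le fun n => by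
      have := hf (φ n); fun_prop)
    filter_upwards [ae_restrict_mem hA] with ω hω
    exact (ENNReal.Tendsto.const_mul (hLlim ω hω) (Or.inr coe_ne_top)).liminf_eq.ge
  have hLfin : ∀ᵐ ω ∂μ.restrict A, L ω ≠ ⊤ := by
    filter_upwards [ae_lt_top (by fun_prop) (ne_top_of_le_ne_top haf hLcost)] with ω hω h
    rw [h, ENNReal.mul_top (by simpa using hz0 ω)] at hω
    exact lt_irrefl _ hω
  let g₁ : Ω → ℝ≥0 := fun ω => (L ω).toNNReal
  have hg₁ : Measurable g₁ := hLmeas.ennreal_toNNReal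
  have hg₁lim : ∀ᵐ ω ∂μ.restrict A, Tendsto (fun n => f (φ n) ω) atTop (𝓝 (g₁ ω)) := by
    filter_upwards [ae_restrict_mem hA, hLfin] with ω hω hfin
    rw [← ENNReal.tendsto_coe, ENNReal.coe_toNNReal hfin]
    exact hLlim ω hω
  have hg₁cost : ∫⁻ ω in A, z ω * g₁ ω ∂μ ≤ a := by
    refine le_trans (lintegral_mono fun ω => ?_) hLcost
    gcongr
    exact ENNReal.coe_toNNReal_le_self
  have hδ2 : δ / 2 ≠ 0 := (ENNReal.half_pos hδ).ne'
  have hev := eventually_lintegral_le_add hlmeas hlsc (fun n => hf (φ n)) hg₁lim hM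
    (fun n => (hr _ _).trans (hle _)) hδ2
  have hfreq := frequently_replace (ν := μ.restrict Aᶜ) hT (fun t => by
      rw [Measure.restrict_apply (hT (measurableSet_singleton t))]
      by_cases ht : t ∈ S
      · convert measure_empty (μ := μ)
        ext ω
        simp only [mem_inter_iff, mem_preimage, mem_singleton_iff, mem_compl_iff,
          mem_empty_iff_false, iff_false, not_and, not_not, A]
        rintro rfl
        exact ht
      · exact measure_mono_null inter_subset_left (by simpa [S] using ht))
    hz hz0 ((hr _ _).trans hz1) hlmeas hlsc
    (fun c hc => ne_top_of_le_ne_top (hlfin c hc) (hr _ _))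
    (fun n => hf (φ n)) hM (fun n => (hr _ _).trans (hle _)) hbf
    (fun n => ne_top_of_le_ne_top (hxs _) ((hr _ _).trans (hcost (φ n)))) hb hδ2
  obtain ⟨n, ⟨g₂, hg₂, hg₂cost, hg₂loss⟩, hg₁loss⟩ := (hfreq.and_eventually hev).exists
  classical
  have hpw : ∀ q : Ω → ℝ≥0 → ℝ≥0∞, ∫⁻ ω, q ω (A.piecewise g₁ g₂ ω) ∂μ =
      ∫⁻ ω in A, q ω (g₁ ω) ∂μ + ∫⁻ ω in Aᶜ, q ω (g₂ ω) ∂μ := fun q => by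
    rw [← lintegral_add_compl _ hA]
    congr 1
    · exact setLIntegral_congr_fun hA fun ω hω => by simp [hω]
    · exact setLIntegral_congr_fun hA.compl fun ω hω => by simp [show ω ∉ A from hω]
  refine ⟨A.piecewise g₁ g₂, hg₁.piecewise hA hg₂, ?_, ?_⟩
  · rw [hpw fun ω s => z ω * s]
    exact (add_le_add hg₁cost hg₂cost).trans hab
  · rw [hpw]
    calc _ ≤ (∫⁻ ω in A, l ω (f (φ n) ω) ∂μ + δ / 2) +
          (∫⁻ ω in Aᶜ, l ω (f (φ n) ω) ∂μ + δ / 2) := add_le_add hg₁loss hg₂loss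
      _ = ∫⁻ ω, l ω (f (φ n) ω) ∂μ + δ := by
          rw [add_add_add_comm, lintegral_add_compl _ hA, ENNReal.add_halves]
      _ ≤ M + δ := by gcongr; exact hle _

end

/-- Under the dual integrability assumption, the value function `x ↦ u(x, U)` is
upper semicontinuous on `(0, ∞)`. -/
theorem value_function_upperSemicontinuous
    {Ω : Type*} [MeasurableSpace Ω] (μ : MeasureTheory.Measure Ω)
    [MeasureTheory.IsProbabilityMeasure μ]
    (Z : Ω → ℝ) (hZmeas : Measurable Z) (hZpos : ∀ ω, 0 < Z ω)
    (hZint : MeasureTheory.Integrable Z μ) (hZexp : ∫ ω, Z ω ∂μ = 1)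
    (U : ℝ → ℝ) (hU : IsUtility U)
    (hV : ∀ y : ℝ, 0 < y → eexp μ (fun ω => ((conj U (y * Z ω) : ℝ) : EReal)) < ⊤) :
    UpperSemicontinuousOn (fun x : ℝ => valueFn μ Z (Uext U) x) (Set.Ioi 0) := by
  have hzcost : ∀ f : Ω → ℝ, ∫⁻ ω, (Z ω).toNNReal * ((f ω).toNNReal : ℝ≥0∞) ∂μ =
      ∫⁻ ω, ENNReal.ofReal (Z ω * f ω) ∂μ := fun f =>
    lintegral_congr fun ω => (ENNReal.ofReal_mul (hZpos ω).le).symm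
  have hbudget : ∀ (y c : ℝ), 0 < y → 0 ≤ c → ∀ f ∈ Cset μ Z c,
      Integrable (fun ω => f ω * (y * Z ω)) μ ∧ ∫ ω, f ω * (y * Z ω) ∂μ ≤ y * c := by
    rintro y c hy hc f ⟨hf, hf0, hcost⟩
    have hZf0 : ∀ ω, 0 ≤ Z ω * f ω := fun ω => mul_nonneg (hZpos ω).le (hf0 ω)
    have hfint : Integrable (fun ω => Z ω * f ω) μ :=
      integrable_of_ofReal (hZmeas.mul hf) (hcost.trans_lt ENNReal.ofReal_lt_top) (by
        simp [ENNReal.ofReal_of_nonpos, hZf0])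
    have heq : (fun ω => f ω * (y * Z ω)) = fun ω => y * (Z ω * f ω) := by
      ext ω; ring
    rw [heq, integral_const_mul]
    refine ⟨hfint.const_mul y, ?_⟩
    gcongr
    rw [← ofReal_integral_eq_lintegral_ofReal hfint (ae_of_all _ hZf0)] at hcost
    exact (ENNReal.ofReal_le_ofReal_iff hc).1 hcost
  intro x hx α hα
  have hx0 : 0 < x := hx
  change valueFn μ Z (Uext U) x < α at hα
  change ∀ᶠ x' in 𝓝[Ioi 0] x, valueFn μ Z (Uext U) x' < α
  -- The value function is nondecreasing, so one larger budget with value `< α` suffices.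
  suffices h : ∃ ε : ℝ, 0 < ε ∧ valueFn μ Z (Uext U) (x + ε) < α by
    obtain ⟨ε, hε, h⟩ := h
    filter_upwards [mem_nhdsWithin_of_mem_nhds (gt_mem_nhds (lt_add_of_pos_right x hε))]
      with x' hx'
    refine lt_of_le_of_lt (biSup_mono fun f hf => ?_) h
    exact ⟨hf.1, hf.2.1, hf.2.2.trans (ENNReal.ofReal_le_ofReal hx'.le)⟩
  by_contra! hcon
  obtain ⟨β', hβ', hβ'α⟩ := EReal.lt_iff_exists_real_btwn.1 hα
  obtain ⟨β, hββ, hβα⟩ := EReal.lt_iff_exists_real_btwn.1 hβ'α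
  have hlt : β' < β := EReal.coe_lt_coe_iff.1 hββ
  have hseq : ∀ n : ℕ, ∃ f ∈ Cset μ Z (x + 1 / ((n : ℝ) + 1)),
      (β : EReal) < eexp μ fun ω => Uext U (f ω) := fun n => by
    have := hβα.trans_le (hcon (1 / ((n : ℝ) + 1)) (by positivity))
    simpa only [valueFn, lt_iSup_iff, exists_prop] using this
  choose f hfC hfβ using hseq
  -- A multiplier so small that the whole budget contributes at most half of the gap `β - β'`.
  let y : ℝ := (β - β') / 2 / (x + 1)
  have hd : 0 < (β - β') / 2 := by linarith
  have hy : 0 < y := by positivity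
  have hyx : y * (x + 1) = (β - β') / 2 := div_mul_cancel₀ _ (by positivity)
  have hY : Measurable fun ω => y * Z ω := hZmeas.const_mul y
  have hYpos : ∀ ω, 0 < y * Z ω := fun ω => mul_pos hy (hZpos ω)
  have hVint := integrable_conj hU hY hYpos (hZint.const_mul y) (hV y hy)
  let J : ℝ := ∫ ω, conj U (y * Z ω) ∂μ
  have hgap : ∀ n, ∫⁻ ω, dualGap U (y * Z ω) (f n ω) ∂μ < ⊤ ∧
      (∫⁻ ω, dualGap U (y * Z ω) (f n ω) ∂μ).toReal ≤ J + (β - β') / 2 - β := fun n => by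
    have hn1 : 1 / ((n : ℝ) + 1) ≤ 1 := by
      rw [div_le_one (by positivity)]; linarith [(n.cast_nonneg : (0 : ℝ) ≤ n)]
    obtain ⟨hfint, hle⟩ := hbudget y _ hy (by positivity) (f n) (hfC n)
    obtain ⟨h1, h2⟩ := eexp_eq_sub_dualGap hU hY hYpos hVint (hfC n).1 (hfC n).2.1 hfint
      (Or.inr (bot_le.trans_lt (hfβ n)))
    refine ⟨h1, ?_⟩
    have h3 := hfβ n
    rw [h2, EReal.coe_lt_coe_iff] at h3
    have h4 : y * (x + 1 / ((n : ℝ) + 1)) ≤ y * (x + 1) := by gcongr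
    linarith
  have hm0 : 0 ≤ J + (β - β') / 2 - β := ENNReal.toReal_nonneg.trans (hgap 0).2
  obtain ⟨g, hg, hgcost, hggap⟩ := exists_budget_loss_le (μ := μ)
    (z := fun ω => (Z ω).toNNReal) (l := fun ω s => dualGap U (y * Z ω) s)
    (f := fun n ω => (f n ω).toNNReal) (M := ENNReal.ofReal (J + (β - β') / 2 - β))
    (x := ENNReal.ofReal x) (xs := fun n => ENNReal.ofReal (x + 1 / ((n : ℝ) + 1)))
    (δ := ENNReal.ofReal ((β - β') / 2)) hZmeas.real_toNNReal
    (fun ω => (Real.toNNReal_pos.2 (hZpos ω)).ne')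
    (by
      have := ofReal_integral_eq_lintegral_ofReal hZint (ae_of_all _ fun ω => (hZpos ω).le)
      rw [hZexp, ENNReal.ofReal_one] at this
      exact this.ge)
    (fun h hh => measurable_dualGap hU hY hYpos hh.coe_nnreal_real)
    (fun ω s a ha => (NNReal.continuous_coe.tendsto s).eventually
      (dualGap_lowerSemicontinuous hU (y * Z ω) s a ha))
    (fun c hc => by
      have hc0 : (0 : ℝ) < c := NNReal.coe_pos.2 (pos_iff_ne_zero.2 hc)
      simp only [dualGap_of_coe (Uext_of_pos hc0)]
      exact ((hVint.add ((hZint.const_mul y).const_mul (c : ℝ))).sub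
        (integrable_const (U c))).lintegral_lt_top.ne)
    (fun n => (hfC n).1.real_toNNReal) ENNReal.ofReal_ne_top
    (fun n => by
      simp only [Real.coe_toNNReal _ ((hfC n).2.1 _)]
      exact (ENNReal.le_ofReal_iff_toReal_le (hgap n).1.ne hm0).2 (hgap n).2)
    ENNReal.ofReal_ne_top (fun n => ENNReal.ofReal_ne_top)
    (ENNReal.tendsto_ofReal (by
      simpa using tendsto_one_div_add_atTop_nhds_zero_nat.const_add x))
    (fun n => by rw [hzcost]; exact (hfC n).2.2)
    (ENNReal.ofReal_pos.2 hd).ne'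
  have hgC : (fun ω => (g ω : ℝ)) ∈ Cset μ Z x := by
    refine ⟨hg.coe_nnreal_real, fun ω => (g ω).2, ?_⟩
    rw [← hzcost]
    simpa using hgcost
  rw [← ENNReal.ofReal_add hm0 hd.le] at hggap
  obtain ⟨hfint, -⟩ := hbudget y x hy hx0.le _ hgC
  obtain ⟨-, heq⟩ := eexp_eq_sub_dualGap hU hY hYpos hVint hgC.1 hgC.2.1 hfint
    (Or.inl (hggap.trans_lt ENNReal.ofReal_lt_top))
  have hle : eexp μ (fun ω => Uext U (g ω)) ≤ valueFn μ Z (Uext U) x :=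
    le_iSup₂_of_le (fun ω => (g ω : ℝ)) hgC le_rfl
  have hβ := hle.trans_lt hβ'
  rw [heq, EReal.coe_lt_coe_iff] at hβ
  have h1 := ENNReal.toReal_le_of_le_ofReal (by linarith) hggap
  have h2 : 0 ≤ ∫ ω, (g ω : ℝ) * (y * Z ω) ∂μ :=
    integral_nonneg fun ω => mul_nonneg (g ω).2 (hYpos ω).le
  linarith
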